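/- Let K be a Hilbert space, let K₀ : K → L²(ℝⁿ) be a bounded everywhere defined operator with ran K₀ ⊂ H^{3/2}(ℝⁿ), and let α ∈ L^∞(ℝⁿ) satisfy μ({x ∈ ℝⁿ : |α(x)| ≥ ε}) < ∞ for every ε > 0, where μ is the Lebesgue measure on ℝⁿ. Then the operator α K₀ (composition of K₀ with multiplication by α) is compact from K to L²(ℝⁿ). -/

import Mathlib

open MeasureTheory Filter Topology

noncomputable section

namespace RobinHS

/-- The boundary `ℝⁿ`, modelled as Euclidean space. -/
abbrev Bdy (n : ℕ) := EuclideanSpace ℝ (Fin n)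

/-- The ambient space `ℝⁿ × ℝ ≅ ℝ^{n+1}`. -/
abbrev Amb (n : ℕ) := Bdy n × ℝ

/-- The open upper half-space `ℝ^{n+1}_+`. -/
def half (n : ℕ) : Set (Amb n) := {x | 0 < x.2}

/-- Lebesgue measure restricted to the half-space. -/
abbrev μplus (n : ℕ) : Measure (Amb n) := volume.restrict (half n)

/-- `L²(ℝ^{n+1}_+)`. -/
abbrev Hplus (n : ℕ) := Lp ℂ 2 (μplus n)

/-- `L²(ℝⁿ)`. -/
abbrev Hbd (n : ℕ) := Lp ℂ 2 (volume : Measure (Bdy n))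

/-- The coordinate directions of `ℝ^{n+1}`. -/
def dirs (n : ℕ) (i : Fin (n + 1)) : Amb n :=
  if h : (i : ℕ) < n then (EuclideanSpace.single ⟨i, h⟩ (1 : ℝ), 0) else (0, 1)

/-- Real-valued test functions compactly supported in `U`. -/
def IsTest (n : ℕ) (U : Set (Amb n)) (φ : Amb n → ℝ) : Prop :=
  ContDiff ℝ (⊤ : ℕ∞) φ ∧ HasCompactSupport φ ∧ tsupport φ ⊆ U

/-- Complex-valued test functions compactly supported in `U`. -/
def IsTestC (n : ℕ) (U : Set (Amb n)) (φ : Amb n → ℂ) : Prop :=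
  ContDiff ℝ (⊤ : ℕ∞) φ ∧ HasCompactSupport φ ∧ tsupport φ ⊆ U

/-- `g` is the weak (distributional) derivative of `f` in direction `v` on `U`. -/
def IsWeakDeriv (n : ℕ) (U : Set (Amb n)) (v : Amb n) (f g : Amb n → ℂ) : Prop :=
  ∀ φ : Amb n → ℝ, IsTest n U φ →
    ∫ x in U, f x * ((fderiv ℝ φ x) v : ℂ) = - ∫ x in U, g x * (φ x : ℂ)

def MemL2 (n : ℕ) (U : Set (Amb n)) (f : Amb n → ℂ) : Prop :=
  MemLp f 2 (volume.restrict U)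

/-- The Sobolev space `H¹(U)`. -/
def MemH1 (n : ℕ) (U : Set (Amb n)) (f : Amb n → ℂ) : Prop :=
  MemL2 n U f ∧ ∀ i : Fin (n + 1), ∃ g, IsWeakDeriv n U (dirs n i) f g ∧ MemL2 n U g

/-- The Sobolev space `H²(U)`. -/
def MemH2 (n : ℕ) (U : Set (Amb n)) (f : Amb n → ℂ) : Prop :=
  MemL2 n U f ∧ ∀ i : Fin (n + 1), ∃ g, IsWeakDeriv n U (dirs n i) f g ∧ MemL2 n U g ∧
    ∀ j : Fin (n + 1), ∃ h, IsWeakDeriv n U (dirs n j) g h ∧ MemL2 n U h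

/-- Finiteness of the Gagliardo seminorm of order `1/2` on `U ⊆ ℝ^{n+1}`. -/
def Gag12 (n : ℕ) (U : Set (Amb n)) (g : Amb n → ℂ) : Prop :=
  Integrable (fun p : Amb n × Amb n => ‖g p.1 - g p.2‖ ^ 2 / ‖p.1 - p.2‖ ^ ((n : ℝ) + 2))
    ((volume.restrict U).prod (volume.restrict U))

/-- The fractional Sobolev space `H^{3/2}(U)` (Sobolev–Slobodeckij description). -/
def MemH32 (n : ℕ) (U : Set (Amb n)) (f : Amb n → ℂ) : Prop :=
  MemL2 n U f ∧ ∀ i : Fin (n + 1), ∃ g, IsWeakDeriv n U (dirs n i) f g ∧ MemL2 n U g ∧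
    Gag12 n U g

/-- The classical Laplacian of a test function. -/
def lapl (n : ℕ) (φ : Amb n → ℝ) (x : Amb n) : ℝ :=
  ∑ i : Fin (n + 1), fderiv ℝ (fun y => fderiv ℝ φ y (dirs n i)) x (dirs n i)

/-- `g = -Δ f` in the weak (distributional) sense on `U`. -/
def IsNegLap (n : ℕ) (U : Set (Amb n)) (f g : Amb n → ℂ) : Prop :=
  ∀ φ : Amb n → ℝ, IsTest n U φ →
    ∫ x in U, f x * (lapl n φ x : ℂ) = - ∫ x in U, g x * (φ x : ℂ)

/-- `b` is the Dirichlet boundary trace `f|_{ℝⁿ}` of `f` (as an `L²(ℝⁿ)` limit). -/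
def HasDTrace (n : ℕ) (f : Amb n → ℂ) (b : Bdy n → ℂ) : Prop :=
  Tendsto (fun t : ℝ => ∫ y : Bdy n, ‖f (y, t) - b y‖ ^ 2) (𝓝[>] (0 : ℝ)) (𝓝 (0 : ℝ))

/-- `b = ∂_ν f|_{ℝⁿ}` is the trace of the normal derivative of `f`, the normal pointing
outwards of the half-space (i.e. downwards). -/
def HasNTrace (n : ℕ) (f : Amb n → ℂ) (b : Bdy n → ℂ) : Prop :=
  ∃ f', IsWeakDeriv n (half n) ((0 : Bdy n), (1 : ℝ)) f f' ∧ HasDTrace n f' (fun y => - b y)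

/-- The Sobolev space `H²₀(ℝ^{n+1}_+)`: `H²`-functions approximable in the `H²`-norm by
smooth functions compactly supported in the open half-space. -/
def MemH20 (n : ℕ) (f : Amb n → ℂ) : Prop :=
  MemH2 n (half n) f ∧
  ∀ ε : ℝ, 0 < ε → ∃ φ : Amb n → ℂ, IsTestC n (half n) φ ∧
    (∫ x in half n, ‖f x - φ x‖ ^ 2) < ε ∧
    (∀ i : Fin (n + 1), ∀ g, IsWeakDeriv n (half n) (dirs n i) f g →
      (∫ x in half n, ‖g x - (fderiv ℝ φ x) (dirs n i)‖ ^ 2) < ε) ∧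
    (∀ i j : Fin (n + 1), ∀ g h, IsWeakDeriv n (half n) (dirs n i) f g →
      IsWeakDeriv n (half n) (dirs n j) g h →
      (∫ x in half n, ‖h x - (fderiv ℝ (fun y => (fderiv ℝ φ y) (dirs n i)) x) (dirs n j)‖ ^ 2) < ε)

/-- Membership in the domain of the Robin Laplacian `A_α`:
`f ∈ H²(ℝ^{n+1}_+)` with `∂_ν f|_{ℝⁿ} = α f|_{ℝⁿ}`. -/
def RobinDom (n : ℕ) (α : Bdy n → ℂ) (f : Amb n → ℂ) : Prop :=
  MemH2 n (half n) f ∧ ∃ b : Bdy n → ℂ, HasDTrace n f b ∧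
    HasNTrace n f (fun y => α y * b y)

/-- The graph relation of the Robin Laplacian `A_α` in `L²(ℝ^{n+1}_+)`: `w = A_α u`. -/
def RobinRel (n : ℕ) (α : Bdy n → ℂ) (u w : Hplus n) : Prop :=
  ∃ f g : Amb n → ℂ, ⇑u =ᵐ[μplus n] f ∧ ⇑w =ᵐ[μplus n] g ∧
    RobinDom n α f ∧ IsNegLap n (half n) f g

/-- The graph relation of the Neumann Laplacian `A_N` in `L²(ℝ^{n+1}_+)`. -/
def NeuRel (n : ℕ) (u w : Hplus n) : Prop :=
  ∃ f g : Amb n → ℂ, ⇑u =ᵐ[μplus n] f ∧ ⇑w =ᵐ[μplus n] g ∧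
    MemH2 n (half n) f ∧ HasNTrace n f (fun _ => 0) ∧ IsNegLap n (half n) f g

/-- Membership in `H^{3/2}_Δ(ℝ^{n+1}_+) = {f ∈ H^{3/2} : Δf ∈ L²}`. -/
def TDom (n : ℕ) (f : Amb n → ℂ) : Prop :=
  MemH32 n (half n) f ∧ ∃ L, IsNegLap n (half n) f L ∧ MemL2 n (half n) L

/-- The graph relation of the operator `T = -Δ` on `H^{3/2}_Δ(ℝ^{n+1}_+)`. -/
def TRel (n : ℕ) (u w : Hplus n) : Prop :=
  ∃ f g : Amb n → ℂ, ⇑u =ᵐ[μplus n] f ∧ ⇑w =ᵐ[μplus n] g ∧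
    TDom n f ∧ IsNegLap n (half n) f g

/-- The graph relation of `T` restricted to `ker Γ₀` (vanishing Neumann trace). -/
def TNeuRel (n : ℕ) (u w : Hplus n) : Prop :=
  ∃ f g : Amb n → ℂ, ⇑u =ᵐ[μplus n] f ∧ ⇑w =ᵐ[μplus n] g ∧
    TDom n f ∧ HasNTrace n f (fun _ => 0) ∧ IsNegLap n (half n) f g

/-- The graph relation of the minimal operator `A = -Δ` on `H²₀(ℝ^{n+1}_+)`. -/
def MinRel (n : ℕ) (u w : Hplus n) : Prop :=
  ∃ f g : Amb n → ℂ, ⇑u =ᵐ[μplus n] f ∧ ⇑w =ᵐ[μplus n] g ∧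
    MemH20 n f ∧ IsNegLap n (half n) f g

/-- `f ∈ ker (T - λ)`. -/
def EigSol (n : ℕ) (lam : ℂ) (f : Amb n → ℂ) : Prop :=
  TDom n f ∧ IsNegLap n (half n) f (fun x => lam * f x)

/-- `α ∈ W^{1,∞}(ℝⁿ)`: bounded with bounded (weak) first-order derivatives,
equivalently bounded and Lipschitz. -/
def IsW1inf (n : ℕ) (α : Bdy n → ℂ) : Prop :=
  (∃ C : ℝ, ∀ x, ‖α x‖ ≤ C) ∧ ∃ L : NNReal, LipschitzWith L α

/-- `‖α‖_∞ = sup_x |α(x)|`. -/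
def supNorm (n : ℕ) (α : Bdy n → ℂ) : ℝ := ⨆ x, ‖α x‖

/-- `γ` is the Poisson operator `γ(λ)` (the `γ`-field): it maps the Neumann trace
`∂_ν f_λ|_{ℝⁿ}` of `f_λ ∈ ker(T - λ)` to `f_λ`. -/
def IsPoissonOp (n : ℕ) (lam : ℂ) (γ : Hbd n →L[ℂ] Hplus n) : Prop :=
  ∀ (Φ : Hbd n) (a : Bdy n → ℂ) (f : Amb n → ℂ),
    ⇑Φ =ᵐ[(volume : Measure (Bdy n))] a → EigSol n lam f → HasNTrace n f a →
      ⇑(γ Φ) =ᵐ[μplus n] f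

/-- `M` is the Neumann-to-Dirichlet map `M(λ)` (the Weyl function): it maps the Neumann
trace of `f_λ ∈ ker(T - λ)` to its Dirichlet trace. -/
def IsNDMap (n : ℕ) (lam : ℂ) (M : Hbd n →L[ℂ] Hbd n) : Prop :=
  ∀ (Φ : Hbd n) (a b : Bdy n → ℂ) (f : Amb n → ℂ),
    ⇑Φ =ᵐ[(volume : Measure (Bdy n))] a → EigSol n lam f → HasNTrace n f a →
      HasDTrace n f b → ⇑(M Φ) =ᵐ[(volume : Measure (Bdy n))] b

/-- `M` is the bounded multiplication operator by `α` in `L²(ℝⁿ)`. -/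
def IsMultOp (n : ℕ) (α : Bdy n → ℂ) (M : Hbd n →L[ℂ] Hbd n) : Prop :=
  ∀ u : Hbd n, ⇑(M u) =ᵐ[(volume : Measure (Bdy n))] fun y => α y * u y

/-! Sobolev spaces on the boundary `ℝⁿ`. -/

def bdirs (n : ℕ) (i : Fin n) : Bdy n := EuclideanSpace.single i (1 : ℝ)

def IsTestB (n : ℕ) (φ : Bdy n → ℝ) : Prop := ContDiff ℝ (⊤ : ℕ∞) φ ∧ HasCompactSupport φ

def IsWeakDerivB (n : ℕ) (v : Bdy n) (f g : Bdy n → ℂ) : Prop :=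
  ∀ φ : Bdy n → ℝ, IsTestB n φ →
    ∫ y, f y * ((fderiv ℝ φ y) v : ℂ) = - ∫ y, g y * (φ y : ℂ)

/-- Finiteness of the Gagliardo seminorm of order `1/2` on `ℝⁿ`. -/
def GagB (n : ℕ) (g : Bdy n → ℂ) : Prop :=
  Integrable (fun p : Bdy n × Bdy n => ‖g p.1 - g p.2‖ ^ 2 / ‖p.1 - p.2‖ ^ ((n : ℝ) + 1))
    ((volume : Measure (Bdy n)).prod (volume : Measure (Bdy n)))

/-- The fractional Sobolev space `H^{3/2}(ℝⁿ)`. -/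
def MemH32B (n : ℕ) (f : Bdy n → ℂ) : Prop :=
  MemLp f 2 (volume : Measure (Bdy n)) ∧
  ∀ i : Fin n, ∃ g, IsWeakDerivB n (bdirs n i) f g ∧
    MemLp g 2 (volume : Measure (Bdy n)) ∧ GagB n g

/-! Abstract notions for (graph relations of) unbounded operators in Hilbert spaces,
Schatten–von Neumann classes, groups, spectra. -/

section Abstract

variable {H G : Type*} [NormedAddCommGroup H] [InnerProductSpace ℂ H] [CompleteSpace H]
  [NormedAddCommGroup G] [InnerProductSpace ℂ G] [CompleteSpace G]

/-- `R` is the (bounded, everywhere defined, two-sided) resolvent of the operator with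
graph relation `Rel` at the point `lam`. -/
def RelResolventAt (Rel : H → H → Prop) (lam : ℂ) (R : H →L[ℂ] H) : Prop :=
  (∀ u : H, Rel (R u) (u + lam • R u)) ∧
  (∀ u w : H, Rel u w → R (w - lam • u) = u)

/-- `lam` belongs to the resolvent set of the operator with graph relation `Rel`. -/
def RelInResolvent (Rel : H → H → Prop) (lam : ℂ) : Prop :=
  ∃ R : H →L[ℂ] H, RelResolventAt Rel lam R

/-- The graph relation of the adjoint operator. -/
def AdjRel (Rel : H → H → Prop) (u w : H) : Prop :=
  ∀ f g : H, Rel f g → (inner ℂ g u : ℂ) = (inner ℂ f w : ℂ)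

/-- Symmetry of the operator with graph relation `Rel`. -/
def IsSymmRel (Rel : H → H → Prop) : Prop :=
  ∀ u w f g : H, Rel u w → Rel f g → (inner ℂ w f : ℂ) = (inner ℂ u g : ℂ)

/-- Selfadjointness of the operator with graph relation `Rel`. -/
def IsSelfAdjRel (Rel : H → H → Prop) : Prop :=
  ∀ u w : H, Rel u w ↔ AdjRel Rel u w

/-- The operator with graph relation `Rel`, shifted by `lam`, is semi-Fredholm:
closed range, and finite-dimensional kernel or finite-codimensional range. -/
def SemiFredholmAt (Rel : H → H → Prop) (lam : ℂ) : Prop :=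
  IsClosed {v : H | ∃ u w, Rel u w ∧ v = w - lam • u} ∧
  ((∃ t : Finset H, {u : H | Rel u (lam • u)} ⊆ (Submodule.span ℂ (t : Set H) : Set H)) ∨
   (∃ t : Finset H,
      Submodule.span ℂ ((t : Set H) ∪ {v : H | ∃ u w, Rel u w ∧ v = w - lam • u}) = ⊤))

/-- The essential spectrum: points where the operator is not semi-Fredholm. -/
def EssSpec (Rel : H → H → Prop) : Set ℂ := {lam | ¬ SemiFredholmAt Rel lam}

/-- The `k`-th approximation number (`= (k+1)`-th singular value) of a bounded operator
between Hilbert spaces: the distance to operators of rank at most `k`. -/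
def sNum (T : H →L[ℂ] G) (k : ℕ) : ℝ :=
  ⨅ F : {F : H →L[ℂ] G // LinearMap.rank F.toLinearMap ≤ (k : Cardinal)}, ‖T - (F : H →L[ℂ] G)‖

/-- Membership in the Schatten–von Neumann ideal `S_p`: the singular values are
`p`-summable. -/
def MemSchatten (p : ℝ) (T : H →L[ℂ] G) : Prop :=
  IsCompactOperator ⇑T ∧ Summable (fun k : ℕ => sNum T k ^ p)

/-- Membership in the weak Schatten–von Neumann ideal `S_{p,∞}`:
`s_k(T) = O(k^{-1/p})`. -/
def MemWeakSchatten (p : ℝ) (T : H →L[ℂ] G) : Prop :=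
  IsCompactOperator ⇑T ∧ ∃ C : ℝ, ∀ k : ℕ, sNum T k ≤ C * ((k : ℝ) + 1) ^ (-(1 / p))

/-- `U` is the strongly continuous unitary group `t ↦ e^{-itA}` generated by the
selfadjoint operator `A` with graph relation `Rel`. -/
def IsUnitaryGroupFor (Rel : H → H → Prop) (U : ℝ → (H →L[ℂ] H)) : Prop :=
  U 0 = 1 ∧ (∀ s t : ℝ, U (s + t) = (U s).comp (U t)) ∧
  (∀ (t : ℝ) (f : H), ‖U t f‖ = ‖f‖) ∧
  (∀ f : H, Continuous fun t : ℝ => U t f) ∧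
  (∀ u w : H, Rel u w → ∀ t : ℝ, HasDerivAt (fun s : ℝ => U s u) ((-Complex.I) • (U t w)) t)

/-- `f` belongs to the absolutely continuous subspace of the selfadjoint operator
generating the unitary group `U`: its spectral measure `μ_f`, whose Fourier–Stieltjes
transform is `t ↦ ⟪f, U(t) f⟫`, has an integrable density w.r.t. Lebesgue measure. -/
def InAc (U : ℝ → (H →L[ℂ] H)) (f : H) : Prop :=
  ∃ h : ℝ → ℝ, Integrable h ∧ (∀ x, 0 ≤ h x) ∧
    ∀ t : ℝ, (inner ℂ f (U t f) : ℂ) = ∫ x : ℝ, Complex.exp ((-Complex.I) * t * x) * (h x : ℂ)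

/-- `lam` is in the resolvent set of the absolutely continuous part (the restriction to
the absolutely continuous subspace) of the operator with graph relation `Rel`. -/
def AcResolventAt (Rel : H → H → Prop) (U : ℝ → (H →L[ℂ] H)) (lam : ℂ) : Prop :=
  ∃ R : H →L[ℂ] H,
    (∀ f : H, InAc U f → InAc U (R f) ∧ Rel (R f) (f + lam • R f)) ∧
    (∀ u w : H, Rel u w → InAc U u → R (w - lam • u) = u)

/-- `W` is a complete wave operator for the pair of unitary groups `U₁`, `U₂` along the
filter `l` (`atTop` for `W₊`, `atBot` for `W₋`): the strong limits
`lim U₂(t)* U₁(t) f` exist on the absolutely continuous subspace of the first operator,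
`W` is isometric there, and its range is the absolutely continuous subspace of the
second operator. -/
def WaveProps (U₁ U₂ : ℝ → (H →L[ℂ] H)) (l : Filter ℝ) (W : H →L[ℂ] H) : Prop :=
  (∀ f : H, InAc U₁ f → Tendsto (fun t : ℝ => U₂ (-t) (U₁ t f)) l (𝓝 (W f))) ∧
  (∀ f : H, InAc U₁ f → ‖W f‖ = ‖f‖ ∧ InAc U₂ (W f)) ∧
  (∀ g : H, InAc U₂ g → ∃ f : H, InAc U₁ f ∧ W f = g)

/-- `V` implements a unitary equivalence between the absolutely continuous parts of the
operators generating `U₁` and `U₂`. -/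
def AcUnitEquiv (U₁ U₂ : ℝ → (H →L[ℂ] H)) (V : H →L[ℂ] H) : Prop :=
  (∀ f : H, InAc U₁ f → ‖V f‖ = ‖f‖ ∧ InAc U₂ (V f)) ∧
  (∀ g : H, InAc U₂ g → ∃ f : H, InAc U₁ f ∧ V f = g) ∧
  (∀ (t : ℝ) (f : H), InAc U₁ f → V (U₁ t f) = U₂ t (V f))

/-- The spectrum of the operator with graph relation `Rel`. -/
def SpecOf (Rel : H → H → Prop) : Set ℂ := {lam | ¬ RelInResolvent Rel lam}

/-- `u` is a generalized eigenvector (root vector) at `lam`: `(A - lam)^k u = 0`. -/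
def RootVec (Rel : H → H → Prop) (lam : ℂ) (u : H) : Prop :=
  ∃ (k : ℕ) (c : ℕ → H), c 0 = u ∧ c k = 0 ∧
    ∀ j, j < k → ∃ w, Rel (c j) w ∧ c (j + 1) = w - lam • c j

/-- The algebraic multiplicity of `lam`: the dimension of the space of root vectors,
expressed as the least cardinality of a finite spanning set. -/
def AlgMult (Rel : H → H → Prop) (lam : ℂ) : ℕ :=
  sInf {k : ℕ | ∃ t : Finset H, t.card = k ∧
    {u : H | RootVec Rel lam u} ⊆ (Submodule.span ℂ (t : Set H) : Set H)}

/-- The discrete spectrum: isolated eigenvalues of finite algebraic multiplicity. -/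
def DiscSpec (Rel : H → H → Prop) : Set ℂ :=
  {lam | lam ∈ SpecOf Rel ∧
    (∃ ε : ℝ, 0 < ε ∧ ∀ z ∈ SpecOf Rel, dist z lam < ε → z = lam) ∧
    (∃ u : H, u ≠ 0 ∧ Rel u (lam • u)) ∧
    ∃ t : Finset H, {u : H | RootVec Rel lam u} ⊆ (Submodule.span ℂ (t : Set H) : Set H)}

end Abstract

end RobinHS

namespace RobinHS

/-!
Let `τ_h` denote translation by `h`. If `f ∈ L^p` has weak derivatives in `L^p`, then
`‖τ_h f - f‖ = O(‖h‖)`, so by the uniform boundedness principle a bounded operator `S` into `L^p`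
with values in `W^{1,p}` satisfies `‖τ_h S - S‖ = O(‖h‖)`. Hence `S` is approximated in operator
norm by its averages over sets of small translations. If `α` has support of finite measure, then
`α` times such an average is given by an operator-valued kernel in `L^p`, and kernel operators are
norm limits of finite-rank ones because simple functions are dense in `L^p`. The general `α` is the
`L^∞` limit of its restrictions to the sets `{ε ≤ |α|}`.
-/

open ContinuousLinearMap
open scoped ENNReal

section KernelOperator

variable {X 𝕜 K E : Type*} [MeasurableSpace X] {μ : Measure X} {p : ℝ≥0∞} [Fact (1 ≤ p)]
  [NontriviallyNormedField 𝕜] [NormedAddCommGroup K] [NormedSpace 𝕜 K]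
  [NormedAddCommGroup E] [NormedSpace 𝕜 E]

/-- The operator `u ↦ (x ↦ k x u)` from `K` to `L^p` defined by an operator-valued kernel
`k ∈ L^p`. -/
def kernelOp : Lp (K →L[𝕜] E) p μ →L[𝕜] K →L[𝕜] Lp E p μ :=
  (compLpL₂ p μ (ContinuousLinearMap.apply 𝕜 E)).flip

lemma coeFn_kernelOp (k : Lp (K →L[𝕜] E) p μ) (u : K) :
    kernelOp k u =ᵐ[μ] fun x ↦ k x u :=
  coeFn_compLp' (ContinuousLinearMap.apply 𝕜 E u) k

lemma kernelOp_indicatorConst {s : Set X} (hs : MeasurableSet s) (hμs : μ s ≠ ∞) (c : K →L[𝕜] E) :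
    kernelOp (indicatorConstLp p hs hμs c) =
      kernelOp (indicatorConstLp p hs hμs (ContinuousLinearMap.id 𝕜 E)) ∘L c := by
  ext1 u
  apply Lp.ext
  rw [comp_apply]
  filter_upwards [coeFn_kernelOp (indicatorConstLp p hs hμs c) u,
    coeFn_kernelOp (indicatorConstLp p hs hμs (ContinuousLinearMap.id 𝕜 E)) (c u),
    indicatorConstLp_coeFn (p := p) (hs := hs) (hμs := hμs) (c := c),
    indicatorConstLp_coeFn (p := p) (hs := hs) (hμs := hμs)
      (c := ContinuousLinearMap.id 𝕜 E)] with x h₁ h₂ h₃ h₄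
  rw [h₁, h₂, h₃, h₄]
  by_cases hx : x ∈ s <;> simp [hx]

theorem isCompactOperator_kernelOp [ProperSpace E] (hp : p ≠ ∞)
    (k : Lp (K →L[𝕜] E) p μ) : IsCompactOperator (kernelOp k) := by
  induction k using Lp.induction hp with
  | indicatorConst c hs hμs =>
    rw [Lp.simpleFunc.coe_indicatorConst, kernelOp_indicatorConst]
    have : IsCompactOperator
        (kernelOp (indicatorConstLp p hs hμs.ne (ContinuousLinearMap.id 𝕜 E))) :=
      isCompactOperator_of_locallyCompactSpace_rng _
    exact this.comp_clm c
  | add hf hg _ hf' hg' =>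
    rw [map_add]
    exact hf'.add hg'
  | isClosed => exact isClosed_setOfPred_isCompactOperator.preimage kernelOp.continuous

end KernelOperator

section LpTop

variable {X E : Type*} [MeasurableSpace X] {μ : Measure X} [NormedAddCommGroup E]

lemma ae_norm_le_norm_of_top (f : Lp E ∞ μ) : ∀ᵐ x ∂μ, ‖f x‖ ≤ ‖f‖ := by
  filter_upwards [enorm_ae_le_eLpNormEssSup f μ] with x hx
  rw [← enorm_le_iff_norm_le, Lp.enorm_def, eLpNorm_exponent_top]
  exact hx

lemma norm_le_of_ae_bound_top {f : Lp E ∞ μ} {C : ℝ} (hC : 0 ≤ C) (h : ∀ᵐ x ∂μ, ‖f x‖ ≤ C) :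
    ‖f‖ ≤ C := by
  rw [Lp.norm_def, eLpNorm_exponent_top]
  exact ENNReal.toReal_le_of_le_ofReal hC (eLpNormEssSup_le_of_ae_bound h)

end LpTop

section MulLp

variable {X 𝕜 E : Type*} [MeasurableSpace X] {μ : Measure X} {p : ℝ≥0∞} [Fact (1 ≤ p)]
  [NontriviallyNormedField 𝕜] [NormedAddCommGroup E] [NormedSpace 𝕜 E]

/-- Multiplication by an `L^∞` function, as a bounded operator on `L^p`. -/
def mulLp : Lp 𝕜 ∞ μ →L[𝕜] Lp E p μ →L[𝕜] Lp E p μ :=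
  (lsmul 𝕜 𝕜).holderL μ ∞ p p

lemma coeFn_mulLp (α : Lp 𝕜 ∞ μ) (f : Lp E p μ) : mulLp α f =ᵐ[μ] fun x ↦ α x • f x :=
  (lsmul 𝕜 𝕜).coeFn_holder α f

end MulLp

lemma eLpNorm_integral_le {X Y E : Type*} [MeasurableSpace X] [MeasurableSpace Y]
    [NormedAddCommGroup E] [NormedSpace ℝ E] {μ : Measure X} [SFinite μ] {ν : Measure Y}
    [IsProbabilityMeasure ν] {p : ℝ≥0∞} (hp : 1 ≤ p) (hp' : p ≠ ∞) {F : X → Y → E}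
    (hF : AEStronglyMeasurable (Function.uncurry F) (μ.prod ν)) {M : ℝ≥0∞}
    (hM : ∀ᵐ y ∂ν, eLpNorm (fun x ↦ F x y) p μ ≤ M) :
    eLpNorm (fun x ↦ ∫ y, F x y ∂ν) p μ ≤ M := by
  lift p to NNReal using hp'
  have hp0 : 0 < p := zero_lt_one.trans_le (mod_cast hp)
  have jensen : ∀ᵐ x ∂μ, ‖∫ y, F x y ∂ν‖ₑ ^ (p : ℝ) ≤ ∫⁻ y, ‖F x y‖ₑ ^ (p : ℝ) ∂ν := by
    filter_upwards [hF.prodMk_left] with x hx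
    rw [← eLpNorm_nnreal_pow_eq_lintegral hp0.ne']
    gcongr
    calc ‖∫ y, F x y ∂ν‖ₑ ≤ ∫⁻ y, ‖F x y‖ₑ ∂ν := enorm_integral_le_lintegral_enorm _
      _ = eLpNorm (F x) 1 ν := eLpNorm_one_eq_lintegral_enorm.symm
      _ ≤ eLpNorm (F x) p ν := eLpNorm_le_eLpNorm_of_exponent_le hp hx
  rw [← ENNReal.rpow_le_rpow_iff (z := p) (mod_cast hp0), eLpNorm_nnreal_pow_eq_lintegral hp0.ne']
  calc ∫⁻ x, ‖∫ y, F x y ∂ν‖ₑ ^ (p : ℝ) ∂μ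
      ≤ ∫⁻ x, ∫⁻ y, ‖F x y‖ₑ ^ (p : ℝ) ∂ν ∂μ := lintegral_mono_ae jensen
    _ = ∫⁻ y, ∫⁻ x, ‖F x y‖ₑ ^ (p : ℝ) ∂μ ∂ν :=
        lintegral_lintegral_swap (hF.enorm.pow_const _)
    _ ≤ ∫⁻ _, M ^ (p : ℝ) ∂ν := by
        refine lintegral_mono_ae ?_
        filter_upwards [hM] with y hy
        rw [← eLpNorm_nnreal_pow_eq_lintegral hp0.ne']
        gcongr
    _ = M ^ (p : ℝ) := by simp

section LpPairing

variable {X 𝕜 E : Type*} [MeasurableSpace X] {μ : Measure X} {p q : ℝ≥0∞} [Fact (1 ≤ p)]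
  [NontriviallyNormedField 𝕜] [NormedAddCommGroup E] [NormedSpace 𝕜 E] [NormedSpace ℝ E]
  [SMulCommClass ℝ 𝕜 E] [CompleteSpace E]

lemma exists_clm_eq_integral_smul [q.HolderConjugate p] {φ : X → 𝕜} (hφ : MemLp φ q μ) :
    ∃ ℓ : Lp E p μ →L[𝕜] E, ∀ f, ℓ f = ∫ x, φ x • f x ∂μ := by
  have : Fact (1 ≤ q) := ⟨ENNReal.HolderConjugate.one_le q p⟩
  have := SMulCommClass.symm ℝ 𝕜 E
  refine ⟨(lsmul (E := E) 𝕜 𝕜).lpPairing μ q p (hφ.toLp φ), fun f ↦ ?_⟩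
  rw [lpPairing_eq_integral]
  refine integral_congr_ae ?_
  filter_upwards [hφ.coeFn_toLp] with x hx
  rw [hx, lsmul_apply]

lemma exists_clm_eq_setAverage {U : Set X} (hU : MeasurableSet U) (hμU : μ U ≠ ∞) :
    ∃ ℓ : Lp E p μ →L[𝕜] E, ∀ f, ℓ f = ⨍ x in U, f x ∂μ := by
  have hind : MemLp (U.indicator fun _ ↦ (1 : 𝕜)) p.conjExponent μ :=
    memLp_indicator_const _ hU 1 (.inr hμU)
  obtain ⟨ℓ, hℓ⟩ := exists_clm_eq_integral_smul (p := p) (E := E) hind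
  have := SMulCommClass.symm ℝ 𝕜 E
  refine ⟨(μ.real U)⁻¹ • ℓ, fun f ↦ ?_⟩
  rw [setAverage_eq, smul_apply, hℓ, ← integral_indicator hU]
  congr 2 with x
  by_cases hx : x ∈ U <;> simp [hx]

end LpPairing

section Translation

variable {G 𝕜 K E : Type*} [AddCommGroup G] [MeasurableSpace G] [MeasurableAdd G]
  {μ : Measure G} [μ.IsAddLeftInvariant] {p : ℝ≥0∞} [Fact (1 ≤ p)] [NontriviallyNormedField 𝕜]
  [NormedAddCommGroup K] [NormedSpace 𝕜 K] [NormedAddCommGroup E] [NormedSpace 𝕜 E]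

variable (𝕜) in
/-- The translation operator `f ↦ f (· + h)` on `L^p`. -/
def translate (h : G) : Lp E p μ →L[𝕜] Lp E p μ :=
  (Lp.compMeasurePreservingₗᵢ 𝕜 (· + h) (measurePreserving_add_right μ h)).toContinuousLinearMap

lemma coeFn_translate (h : G) (f : Lp E p μ) : translate 𝕜 h f =ᵐ[μ] fun x ↦ f (x + h) :=
  Lp.coeFn_compMeasurePreserving f (measurePreserving_add_right μ h)

lemma norm_translate_apply (h : G) (f : Lp E p μ) : ‖translate 𝕜 h f‖ = ‖f‖ :=
  Lp.norm_compMeasurePreserving f (measurePreserving_add_right μ h)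

lemma translate_comp_translate (g h : G) :
    (translate 𝕜 g ∘L translate 𝕜 h : Lp E p μ →L[𝕜] Lp E p μ) = translate 𝕜 (g + h) := by
  ext1 f
  apply Lp.ext
  rw [comp_apply]
  filter_upwards [coeFn_translate (𝕜 := 𝕜) g (translate 𝕜 h f),
    (measurePreserving_add_right μ g).quasiMeasurePreserving.ae (coeFn_translate (𝕜 := 𝕜) h f),
    coeFn_translate (𝕜 := 𝕜) (g + h) f] with x h₁ h₂ h₃
  rw [h₁, h₂, h₃, add_assoc]

lemma translate_zero : translate 𝕜 (0 : G) = ContinuousLinearMap.id 𝕜 (Lp E p μ) := by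
  ext1 f
  apply Lp.ext
  filter_upwards [coeFn_translate (𝕜 := 𝕜) 0 f] with x hx
  rw [hx, add_zero, id_apply]

lemma norm_translate_add_sub_le (g h : G) (f : Lp E p μ) :
    ‖translate 𝕜 (g + h) f - f‖ ≤ ‖translate 𝕜 g f - f‖ + ‖translate 𝕜 h f - f‖ :=
  calc ‖translate 𝕜 (g + h) f - f‖
      = ‖translate 𝕜 g (translate 𝕜 h f - f) + (translate 𝕜 g f - f)‖ := by
        rw [map_sub, ← comp_apply, translate_comp_translate, sub_add_sub_cancel]
    _ ≤ ‖translate 𝕜 h f - f‖ + ‖translate 𝕜 g f - f‖ := by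
        rw [← norm_translate_apply (𝕜 := 𝕜) g (translate 𝕜 h f - f)]
        exact norm_add_le _ _
    _ = _ := add_comm _ _

lemma continuous_translate_comp [TopologicalSpace G] [ContinuousSub G] {S : K →L[𝕜] Lp E p μ}
    (hS : ContinuousAt (fun h ↦ translate 𝕜 h ∘L S) 0) :
    Continuous fun h ↦ translate 𝕜 h ∘L S := by
  refine continuous_iff_continuousAt.2 fun x ↦ ?_
  have h₁ : Tendsto (fun h ↦ translate 𝕜 (h - x) ∘L S) (𝓝 x) (𝓝 (translate 𝕜 0 ∘L S)) :=
    hS.tendsto.comp (by simpa using (continuous_sub_right x).tendsto x)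
  have h₂ := ((compL 𝕜 K (Lp E p μ) (Lp E p μ) (translate 𝕜 x)).continuous.tendsto _).comp h₁
  have h₃ (h : G) : translate 𝕜 x ∘L translate 𝕜 h ∘L S = translate 𝕜 (x + h) ∘L S := by
    rw [← comp_assoc, translate_comp_translate]
  simpa [Function.comp_def, ContinuousAt, h₃] using h₂

lemma eLpNorm_sub_setAverage_le [MeasurableAdd₂ G] [SFinite μ] [NormedSpace ℝ E]
    [CompleteSpace E] (hp : p ≠ ∞) {U : Set G} (hU : MeasurableSet U) (hU₀ : μ U ≠ 0)
    (hμU : μ U ≠ ∞) {f : Lp E p μ} {M : ℝ} (hM : ∀ h ∈ U, ‖translate 𝕜 h f - f‖ ≤ M) :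
    eLpNorm (fun x ↦ f x - ⨍ h in U, f (h + x) ∂μ) p μ ≤ ENNReal.ofReal M := by
  have : Fact (μ U < ∞) := ⟨hμU.lt_top⟩
  have : NeZero (μ.restrict U) := ⟨by simpa using hU₀⟩
  have hint (x : G) :
      Integrable (fun h ↦ f (h + x)) ((μ.restrict U Set.univ)⁻¹ • μ.restrict U) := by
    have h₁ : MemLp (fun h ↦ f (h + x)) p μ :=
      (Lp.memLp f).comp_measurePreserving (measurePreserving_add_right μ x)
    exact ((h₁.restrict U).integrable Fact.out).to_average
  have hsub (x : G) : f x - ⨍ h in U, f (h + x) ∂μ = ⨍ h in U, (f x - f (h + x)) ∂μ := by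
    rw [average, average, integral_sub (integrable_const _) (hint x), integral_const,
      probReal_univ, one_smul]
  simp only [hsub]
  refine eLpNorm_integral_le Fact.out hp ?_ ?_
  · have hf := Lp.stronglyMeasurable f
    exact ((hf.comp_measurable measurable_fst).sub
      (hf.comp_measurable (measurable_snd.add measurable_fst))).aestronglyMeasurable
  · refine Measure.ae_smul_measure ?_ _
    filter_upwards [ae_restrict_mem hU] with h hh
    have : eLpNorm (fun x ↦ f x - f (h + x)) p μ = ‖translate 𝕜 h f - f‖ₑ := by
      rw [enorm_sub_rev, Lp.enorm_def]
      refine eLpNorm_congr_ae ?_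
      filter_upwards [Lp.coeFn_sub f (translate 𝕜 h f), coeFn_translate (𝕜 := 𝕜) h f] with x h₁ h₂
      rw [h₁, Pi.sub_apply, h₂, add_comm]
    rw [this, ← ofReal_norm]
    exact ENNReal.ofReal_le_ofReal (hM h hh)

end Translation

lemma continuous_translate_apply {G 𝕜 E : Type*} [AddCommGroup G] [TopologicalSpace G]
    [IsTopologicalAddGroup G] [MeasurableSpace G] [BorelSpace G] {μ : Measure G}
    [μ.IsAddLeftInvariant] [μ.InnerRegularCompactLTTop] [IsLocallyFiniteMeasure μ] {p : ℝ≥0∞}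
    [Fact (1 ≤ p)] [NontriviallyNormedField 𝕜] [NormedAddCommGroup E] [NormedSpace 𝕜 E]
    (hp : p ≠ ∞) (f : Lp E p μ) : Continuous fun h ↦ translate 𝕜 h f :=
  continuous_const.compMeasurePreservingLp
    (ContinuousMap.continuous_of_continuous_uncurry (fun h ↦ ⟨(· + h), continuous_add_const h⟩)
      (continuous_snd.add continuous_fst))
    (measurePreserving_add_right μ) hp

section CompactnessCriterion

variable {G 𝕜 K E : Type*} [AddCommGroup G] [TopologicalSpace G] [IsTopologicalAddGroup G]
  [MeasurableSpace G] [BorelSpace G] {μ : Measure G} [μ.IsAddLeftInvariant]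
  {p : ℝ≥0∞} [Fact (1 ≤ p)] [NontriviallyNormedField 𝕜] [NormedAddCommGroup K] [NormedSpace 𝕜 K]
  [NormedAddCommGroup E] [NormedSpace 𝕜 E]

lemma exists_measurableSet_norm_translate_comp_sub_lt [IsLocallyFiniteMeasure μ]
    [μ.IsOpenPosMeasure] {S : K →L[𝕜] Lp E p μ}
    (hS : Continuous fun h ↦ translate 𝕜 h ∘L S) {ε : ℝ} (hε : 0 < ε) :
    ∃ U, MeasurableSet U ∧ μ U ≠ 0 ∧ μ U ≠ ∞ ∧ ∀ h ∈ U, ‖translate 𝕜 h ∘L S - S‖ < ε := by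
  obtain ⟨V, h0V, hV, hμV⟩ := μ.exists_isOpen_measure_lt_top (0 : G)
  have hopen : IsOpen {h | ‖translate 𝕜 h ∘L S - S‖ < ε} :=
    isOpen_lt (hS.sub continuous_const).norm continuous_const
  refine ⟨V ∩ {h | ‖translate 𝕜 h ∘L S - S‖ < ε}, (hV.inter hopen).measurableSet,
    ((hV.inter hopen).measure_pos μ ⟨0, h0V, ?_⟩).ne',
    measure_ne_top_of_subset Set.inter_subset_left hμV.ne, fun h hh ↦ hh.2⟩
  simpa [translate_zero] using hε

variable [SecondCountableTopology G]

lemma memLp_smul_comp_translate_comp {S : K →L[𝕜] Lp E p μ}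
    (hS : Continuous fun h ↦ translate 𝕜 h ∘L S) {α : G → 𝕜} (hα : MemLp α p μ)
    (ℓ : Lp E p μ →L[𝕜] E) : MemLp (fun x ↦ α x • (ℓ ∘L translate 𝕜 x ∘L S)) p μ := by
  have hcont : Continuous fun x ↦ ℓ ∘L translate 𝕜 x ∘L S :=
    (compL 𝕜 K (Lp E p μ) E ℓ).continuous.comp hS
  have hbound (x : G) : ‖ℓ ∘L translate 𝕜 x ∘L S‖ ≤ ‖ℓ‖ * ‖S‖ :=
    opNorm_le_bound _ (by positivity) fun u ↦
      calc ‖ℓ (translate 𝕜 x (S u))‖ ≤ ‖ℓ‖ * ‖translate 𝕜 x (S u)‖ := ℓ.le_opNorm _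
        _ = ‖ℓ‖ * ‖S u‖ := by rw [norm_translate_apply (𝕜 := 𝕜)]
        _ ≤ ‖ℓ‖ * (‖S‖ * ‖u‖) := by gcongr; exact S.le_opNorm u
        _ = ‖ℓ‖ * ‖S‖ * ‖u‖ := (mul_assoc ..).symm
  exact (memLp_top_of_bound hcont.aestronglyMeasurable _ (ae_of_all μ hbound)).smul hα

variable [IsLocallyFiniteMeasure μ] [μ.IsOpenPosMeasure] [NormedSpace ℝ E] [SMulCommClass ℝ 𝕜 E]
  [ProperSpace E]

lemma exists_isCompactOperator_norm_mulLp_comp_sub_le (hp : p ≠ ∞) {S : K →L[𝕜] Lp E p μ}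
    (hS : Continuous fun h ↦ translate 𝕜 h ∘L S) {α : G → 𝕜} (hα : MemLp α ∞ μ)
    (hsupp : μ (Function.support α) ≠ ∞) {ε : ℝ} (hε : 0 < ε) :
    ∃ R : K →L[𝕜] Lp E p μ, IsCompactOperator R ∧
      ‖mulLp (hα.toLp α) ∘L S - R‖ ≤ ‖hα.toLp α‖ * ε := by
  obtain ⟨U, hU, hU₀, hμU, hSU⟩ := exists_measurableSet_norm_translate_comp_sub_lt hS hε
  obtain ⟨ℓ, hℓ⟩ := exists_clm_eq_setAverage (𝕜 := 𝕜) (E := E) (p := p) hU hμU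
  have hαp : MemLp α p μ := hα.mono_exponent_of_measure_support_ne_top
    (fun x hx ↦ Function.notMem_support.1 hx) hsupp le_top
  have hk := memLp_smul_comp_translate_comp hS hαp ℓ
  refine ⟨kernelOp (hk.toLp _), isCompactOperator_kernelOp hp _,
    opNorm_le_bound _ (by positivity) fun u ↦ ?_⟩
  have haverage (x : G) : ℓ (translate 𝕜 x (S u)) = ⨍ h in U, S u (h + x) ∂μ := by
    rw [hℓ]
    exact average_congr (ae_restrict_of_ae (coeFn_translate x (S u)))
  have hdiff : (mulLp (hα.toLp α) ∘L S - kernelOp (hk.toLp _)) u =ᵐ[μ]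
      fun x ↦ hα.toLp α x • (S u x - ⨍ h in U, S u (h + x) ∂μ) := by
    rw [sub_apply, comp_apply]
    filter_upwards [Lp.coeFn_sub (mulLp (hα.toLp α) (S u)) (kernelOp (hk.toLp _) u),
      coeFn_mulLp (hα.toLp α) (S u), coeFn_kernelOp (hk.toLp _) u, hα.coeFn_toLp,
      hk.coeFn_toLp] with x h₁ h₂ h₃ h₄ h₅
    rw [h₁, Pi.sub_apply, h₂, h₃, h₄, h₅, smul_sub, ← haverage]
    rfl
  have hosc : eLpNorm (fun x ↦ S u x - ⨍ h in U, S u (h + x) ∂μ) p μ ≤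
      ENNReal.ofReal (ε * ‖u‖) :=
    eLpNorm_sub_setAverage_le (𝕜 := 𝕜) hp hU hU₀ hμU fun h hh ↦
      le_of_opNorm_le _ (hSU h hh).le u
  rw [Lp.norm_def, mul_assoc]
  refine ENNReal.toReal_le_of_le_ofReal (by positivity) ?_
  calc eLpNorm _ p μ
      ≤ ENNReal.ofReal ‖hα.toLp α‖ *
          eLpNorm (fun x ↦ S u x - ⨍ h in U, S u (h + x) ∂μ) p μ := by
        refine eLpNorm_le_mul_eLpNorm_of_ae_le_mul ?_ p
        filter_upwards [hdiff, ae_norm_le_norm_of_top (hα.toLp α)] with x h₁ h₂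
        rw [h₁, norm_smul]
        gcongr
    _ ≤ ENNReal.ofReal (‖hα.toLp α‖ * (ε * ‖u‖)) := by
        rw [ENNReal.ofReal_mul (norm_nonneg _)]
        gcongr

theorem isCompactOperator_mulLp_comp_of_support (hp : p ≠ ∞) {S : K →L[𝕜] Lp E p μ}
    (hS : Continuous fun h ↦ translate 𝕜 h ∘L S) {α : G → 𝕜} (hα : MemLp α ∞ μ)
    (hsupp : μ (Function.support α) ≠ ∞) : IsCompactOperator (mulLp (hα.toLp α) ∘L S) := by
  refine isClosed_setOfPred_isCompactOperator.closure_subset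
    (s := {R : K →L[𝕜] Lp E p μ | IsCompactOperator R}) (Metric.mem_closure_iff.2 fun ε hε ↦ ?_)
  obtain ⟨R, hR, hle⟩ := exists_isCompactOperator_norm_mulLp_comp_sub_le hp hS hα hsupp
    (ε := ε / (‖hα.toLp α‖ + 1)) (by positivity)
  refine ⟨R, hR, ?_⟩
  calc dist (mulLp (hα.toLp α) ∘L S) R
      ≤ ‖hα.toLp α‖ * (ε / (‖hα.toLp α‖ + 1)) := by rwa [dist_eq_norm]
    _ = ε * (‖hα.toLp α‖ / (‖hα.toLp α‖ + 1)) := by ring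
    _ < ε * 1 := by
        gcongr
        exact (div_lt_one (by positivity)).2 (lt_add_one _)
    _ = ε := mul_one ε

theorem isCompactOperator_mulLp_comp (hp : p ≠ ∞) {S : K →L[𝕜] Lp E p μ}
    (hS : Continuous fun h ↦ translate 𝕜 h ∘L S) {α : Lp 𝕜 ∞ μ}
    (hα : ∀ ε > 0, μ {x | ε ≤ ‖α x‖} ≠ ∞) : IsCompactOperator (mulLp α ∘L S) := by
  have hcont : Continuous fun β : Lp 𝕜 ∞ μ ↦ (mulLp β ∘L S : K →L[𝕜] Lp E p μ) := by
    fun_prop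
  refine (isClosed_setOfPred_isCompactOperator.preimage hcont).closure_subset
    (Metric.mem_closure_iff.2 fun ε hε ↦ ?_)
  have hmeas : MeasurableSet {x | ε / 2 ≤ ‖α x‖} :=
    measurableSet_le measurable_const (Lp.stronglyMeasurable α).norm.measurable
  have hind := (Lp.memLp α).indicator hmeas
  refine ⟨hind.toLp _, isCompactOperator_mulLp_comp_of_support hp hS hind ?_, ?_⟩
  · exact measure_ne_top_of_subset (Set.support_indicator_subset) (hα _ (half_pos hε))
  · rw [dist_eq_norm]
    refine (norm_le_of_ae_bound_top (half_pos hε).le ?_).trans_lt (half_lt_self hε)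
    filter_upwards [Lp.coeFn_sub α (hind.toLp _), hind.coeFn_toLp] with x h₁ h₂
    rw [h₁, Pi.sub_apply, h₂]
    by_cases hx : x ∈ {x | ε / 2 ≤ ‖α x‖}
    · simpa [Set.indicator_of_mem hx] using (half_pos hε).le
    · simpa [Set.indicator_of_notMem hx] using (not_le.1 hx).le

end CompactnessCriterion

section WeakDerivative

open scoped Convolution

variable {n : ℕ} {v : Bdy n}

local notation "ℒ" => ContinuousLinearMap.flip (lsmul (E := ℂ) ℝ ℝ)

lemma IsWeakDerivB.convolution_fderiv {f g : Bdy n → ℂ} (hfg : IsWeakDerivB n v f g)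
    {ψ : Bdy n → ℝ} (hψ : IsTestB n ψ) (x : Bdy n) :
    (f ⋆[ℒ] fun z ↦ fderiv ℝ ψ z v) x = (g ⋆[ℒ] ψ) x := by
  have hreflect : IsTestB n fun y ↦ ψ (x - y) :=
    ⟨hψ.1.comp (contDiff_const.sub contDiff_id), hψ.2.comp_homeomorph (Homeomorph.subLeft x)⟩
  have hderiv (y : Bdy n) : fderiv ℝ (fun z ↦ ψ (x - z)) y v = -fderiv ℝ ψ (x - y) v := by
    have hchain := (hψ.1.differentiable (by simp) (x - y)).hasFDerivAt.comp y
      ((hasFDerivAt_id y).const_sub x)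
    exact (DFunLike.congr_fun hchain.fderiv v).trans (by simp)
  have hweak := hfg _ hreflect
  simp only [hderiv, Complex.ofReal_neg, mul_neg, integral_neg, neg_inj] at hweak
  simpa only [convolution, flip_apply, lsmul_apply, Complex.real_smul, mul_comm] using hweak

lemma IsWeakDerivB.hasDerivAt_convolution {f g : Bdy n → ℂ} (hfg : IsWeakDerivB n v f g)
    (hf : LocallyIntegrable f) {ψ : Bdy n → ℝ} (hψ : IsTestB n ψ) (t : ℝ) :
    HasDerivAt (fun s : ℝ ↦ (f ⋆[ℒ] ψ) (s • v)) ((g ⋆[ℒ] ψ) (t • v)) t := by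
  have hfderiv := hψ.2.hasFDerivAt_convolution_right ℒ hf (hψ.1.of_le (mod_cast le_top)) (t • v)
  have hcomp := hfderiv.comp_hasDerivAt t ((hasDerivAt_id t).smul_const v)
  rwa [one_smul, convolution_precompR_apply ℒ hf (hψ.2.fderiv ℝ)
    (hψ.1.continuous_fderiv (by simp)), hfg.convolution_fderiv hψ] at hcomp

lemma IsWeakDerivB.hasDerivAt_integral_smul_comp_add {f g : Bdy n → ℂ}
    (hfg : IsWeakDerivB n v f g) (hf : LocallyIntegrable f) {φ : Bdy n → ℝ} (hφ : IsTestB n φ)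
    (t : ℝ) :
    HasDerivAt (fun s : ℝ ↦ ∫ y, φ y • f (y + s • v)) (∫ y, φ y • g (y + t • v)) t := by
  have hreflect : IsTestB n fun y ↦ φ (-y) :=
    ⟨hφ.1.comp contDiff_neg, hφ.2.comp_homeomorph (Homeomorph.neg _)⟩
  have hconv (k : Bdy n → ℂ) (x : Bdy n) :
      (k ⋆[ℒ] fun y ↦ φ (-y)) x = ∫ y, φ y • k (y + x) := by
    simp only [convolution, flip_apply, lsmul_apply, neg_sub]
    rw [← integral_add_right_eq_self _ x]
    simp only [add_sub_cancel_right]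
  simpa only [hconv] using hfg.hasDerivAt_convolution hf hreflect t

variable {p : ℝ≥0∞} [Fact (1 ≤ p)]

theorem IsWeakDerivB.translate_sub_eq_integral {f g : Lp ℂ p (volume : Measure (Bdy n))}
    (hfg : IsWeakDerivB n v f g) (hp : p ≠ ∞) (t : ℝ) :
    translate ℂ (t • v) f - f = ∫ s in 0..t, translate ℂ (s • v) g := by
  have hcont : Continuous fun s : ℝ ↦ translate ℂ (s • v) g :=
    (continuous_translate_apply hp g).comp (continuous_id.smul continuous_const)
  have hlocal (w : Lp ℂ p (volume : Measure (Bdy n))) : LocallyIntegrable w :=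
    (Lp.memLp w).locallyIntegrable Fact.out
  refine Lp.ext (ae_eq_of_integral_contDiff_smul_eq (hlocal _) (hlocal _) fun φ hφ hφ' ↦ ?_)
  have hφq : MemLp φ p.conjExponent := hφ.continuous.memLp_of_hasCompactSupport hφ'
  obtain ⟨ℓ, hℓ⟩ := exists_clm_eq_integral_smul (E := ℂ) (p := p) hφq
  have htranslate (w : Lp ℂ p (volume : Measure (Bdy n))) (s : ℝ) :
      ℓ (translate ℂ (s • v) w) = ∫ y, φ y • w (y + s • v) := by
    rw [hℓ]
    refine integral_congr_ae ?_
    filter_upwards [coeFn_translate (𝕜 := ℂ) (s • v) w] with y hy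
    rw [hy]
  have hderiv (s : ℝ) : HasDerivAt (fun s : ℝ ↦ ℓ (translate ℂ (s • v) f))
      (ℓ (translate ℂ (s • v) g)) s := by
    simpa only [htranslate] using hfg.hasDerivAt_integral_smul_comp_add (hlocal f) ⟨hφ, hφ'⟩ s
  rw [← hℓ, ← hℓ, map_sub, ← ℓ.intervalIntegral_comp_comm (hcont.intervalIntegrable 0 t),
    intervalIntegral.integral_eq_sub_of_hasDerivAt (fun s _ ↦ hderiv s)
      ((ℓ.continuous.comp hcont).intervalIntegrable 0 t), zero_smul, translate_zero,
      id_apply]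

lemma IsWeakDerivB.norm_translate_sub_le {f g : Lp ℂ p (volume : Measure (Bdy n))}
    (hfg : IsWeakDerivB n v f g) (hp : p ≠ ∞) (t : ℝ) :
    ‖translate ℂ (t • v) f - f‖ ≤ ‖g‖ * |t| := by
  rw [hfg.translate_sub_eq_integral hp]
  simpa only [sub_zero] using intervalIntegral.norm_integral_le_of_norm_le_const (a := 0) (b := t)
    fun s _ ↦ (norm_translate_apply (𝕜 := ℂ) (s • v) g).le

lemma norm_translate_sub_le_sum_mul_norm (hp : p ≠ ∞) {f : Lp ℂ p (volume : Measure (Bdy n))}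
    {g : Fin n → Lp ℂ p (volume : Measure (Bdy n))}
    (hfg : ∀ i, IsWeakDerivB n (bdirs n i) f (g i)) (h : Bdy n) :
    ‖translate ℂ h f - f‖ ≤ (∑ i, ‖g i‖) * ‖h‖ := by
  have hsum : ∑ i, h i • bdirs n i = h := by
    simpa [bdirs] using (EuclideanSpace.basisFun (Fin n) ℝ).sum_repr h
  calc ‖translate ℂ h f - f‖
      = ‖translate ℂ (∑ i, h i • bdirs n i) f - f‖ := by rw [hsum]
    _ ≤ ∑ i, ‖translate ℂ (h i • bdirs n i) f - f‖ :=
        Finset.le_sum_of_subadditive (fun x ↦ ‖translate ℂ x f - f‖)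
          (by rw [translate_zero, id_apply, sub_self, norm_zero])
          (fun x y ↦ norm_translate_add_sub_le x y f) _ _
    _ ≤ ∑ i, ‖g i‖ * ‖h‖ := by
        gcongr with i
        refine ((hfg i).norm_translate_sub_le hp (h i)).trans ?_
        gcongr
        exact PiLp.norm_apply_le h i
    _ = (∑ i, ‖g i‖) * ‖h‖ := (Finset.sum_mul ..).symm

end WeakDerivative

section SobolevSpace

/-- The Sobolev space `W^{1,p}(ℝⁿ)`: functions in `L^p` with weak first-order partial derivatives
in `L^p`. -/
def MemW1 (n : ℕ) (p : ℝ≥0∞) (f : Bdy n → ℂ) : Prop :=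
  MemLp f p ∧ ∀ i, ∃ g, IsWeakDerivB n (bdirs n i) f g ∧ MemLp g p

variable {n : ℕ}

lemma MemH32B.memW1 {f : Bdy n → ℂ} (hf : MemH32B n f) : MemW1 n 2 f :=
  ⟨hf.1, fun i ↦ (hf.2 i).imp fun _ hg ↦ ⟨hg.1, hg.2.1⟩⟩

lemma IsWeakDerivB.congr_ae {v : Bdy n} {f f' g g' : Bdy n → ℂ} (hfg : IsWeakDerivB n v f g)
    (hf : f =ᵐ[volume] f') (hg : g =ᵐ[volume] g') : IsWeakDerivB n v f' g' := fun φ hφ ↦ by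
  have hf' := integral_congr_ae (hf.symm.mul (.refl _ fun y ↦ (fderiv ℝ φ y v : ℂ)))
  have hg' := integral_congr_ae (hg.mul (.refl _ fun y ↦ (φ y : ℂ)))
  exact hf'.trans ((hfg φ hφ).trans (congrArg Neg.neg hg'))

lemma MemW1.congr_ae {p : ℝ≥0∞} {f f' : Bdy n → ℂ} (hf : MemW1 n p f) (hff' : f =ᵐ[volume] f') :
    MemW1 n p f' :=
  ⟨hf.1.ae_eq hff', fun i ↦ (hf.2 i).imp fun _ hg ↦ ⟨hg.1.congr_ae hff' .rfl, hg.2⟩⟩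

lemma MemW1.exists_norm_translate_sub_le {p : ℝ≥0∞} [Fact (1 ≤ p)] (hp : p ≠ ∞)
    {f : Lp ℂ p (volume : Measure (Bdy n))} (hf : MemW1 n p f) :
    ∃ C, ∀ h, ‖translate ℂ h f - f‖ ≤ C * ‖h‖ := by
  choose g hfg hg using hf.2
  exact ⟨_, norm_translate_sub_le_sum_mul_norm hp (g := fun i ↦ (hg i).toLp (g i)) fun i ↦
    (hfg i).congr_ae .rfl (hg i).coeFn_toLp.symm⟩

end SobolevSpace

lemma exists_opNorm_le_mul_of_forall_exists {ι 𝕜 K F : Type*} [RCLike 𝕜]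
    [NormedAddCommGroup K] [NormedSpace 𝕜 K] [CompleteSpace K] [NormedAddCommGroup F]
    [NormedSpace 𝕜 F] {A : ι → K →L[𝕜] F} {w : ι → ℝ} (hw : ∀ i, 0 ≤ w i)
    (h : ∀ u, ∃ C, ∀ i, ‖A i u‖ ≤ C * w i) : ∃ C, ∀ i, ‖A i‖ ≤ C * w i := by
  obtain ⟨C, hC⟩ := banach_steinhaus (g := fun i ↦ ((w i)⁻¹ : 𝕜) • A i) fun u ↦ by
    obtain ⟨C, hC⟩ := h u
    refine ⟨|C|, fun i ↦ ?_⟩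
    calc ‖((w i)⁻¹ : 𝕜) • A i u‖ = (w i)⁻¹ * ‖A i u‖ := by
          rw [norm_smul, norm_inv, RCLike.norm_of_nonneg (hw i)]
      _ ≤ (w i)⁻¹ * (|C| * w i) := by
          have := hw i
          gcongr
          exact (hC i).trans (by gcongr; exact le_abs_self C)
      _ = |C| * ((w i)⁻¹ * w i) := mul_left_comm ..
      _ ≤ |C| := mul_le_of_le_one_right (abs_nonneg C) inv_mul_le_one
  refine ⟨C, fun i ↦ ?_⟩
  obtain hi | hi := (hw i).eq_or_lt
  · have : A i = 0 := by
      ext1 u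
      obtain ⟨D, hD⟩ := h u
      simpa [← hi] using hD i
    rw [this, ← hi, norm_zero, mul_zero]
  · have := hC i
    rwa [norm_smul, norm_inv, RCLike.norm_of_nonneg (hw i), inv_mul_le_iff₀ hi, mul_comm] at this

theorem continuous_translate_comp_of_memW1 {n : ℕ} {p : ℝ≥0∞} [Fact (1 ≤ p)] (hp : p ≠ ∞)
    {K : Type*} [NormedAddCommGroup K] [NormedSpace ℂ K] [CompleteSpace K]
    {S : K →L[ℂ] Lp ℂ p (volume : Measure (Bdy n))} (hS : ∀ u, MemW1 n p (S u)) :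
    Continuous fun h ↦ translate ℂ h ∘L S := by
  refine continuous_translate_comp ?_
  obtain ⟨C, hC⟩ := exists_opNorm_le_mul_of_forall_exists (𝕜 := ℂ)
    (A := fun h ↦ translate ℂ h ∘L S - S) (fun h : Bdy n ↦ norm_nonneg h)
    fun u ↦ (hS u).exists_norm_translate_sub_le hp
  refine continuousAt_of_locally_lipschitz one_pos C fun h _ ↦ ?_
  simpa only [dist_eq_norm, translate_zero, id_comp, sub_zero] using hC h

theorem statement4_general (n : ℕ) (p : ℝ≥0∞) [Fact (1 ≤ p)] (hp : p ≠ ∞) (K : Type*)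
    [NormedAddCommGroup K] [NormedSpace ℂ K] [CompleteSpace K]
    (K₀ : K →L[ℂ] Lp ℂ p (volume : Measure (Bdy n))) (hran : ∀ u, MemW1 n p (K₀ u))
    (α : Bdy n → ℂ) (hα : MemLp α ∞) (hsmall : ∀ ε : ℝ, 0 < ε → volume {y | ε ≤ ‖α y‖} < ∞)
    (T : K →L[ℂ] Lp ℂ p (volume : Measure (Bdy n)))
    (hT : ∀ u, T u =ᵐ[volume] fun y ↦ α y * K₀ u y) : IsCompactOperator T := by
  have hlevel (ε : ℝ) (hε : 0 < ε) : volume {y | ε ≤ ‖hα.toLp α y‖} ≠ ∞ := by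
    have : {y | ε ≤ ‖hα.toLp α y‖} =ᵐ[volume] {y | ε ≤ ‖α y‖} :=
      hα.coeFn_toLp.fun_comp fun z ↦ ε ≤ ‖z‖
    exact (measure_congr this).trans_ne (hsmall ε hε).ne
  have hTmul : T = mulLp (hα.toLp α) ∘L K₀ := by
    ext1 u
    apply Lp.ext
    filter_upwards [hT u, coeFn_mulLp (hα.toLp α) (K₀ u), hα.coeFn_toLp] with y h₁ h₂ h₃
    rw [h₁, comp_apply, h₂, h₃, smul_eq_mul]
  rw [hTmul]
  exact isCompactOperator_mulLp_comp hp (continuous_translate_comp_of_memW1 hp hran) hlevel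

theorem statement4 (n : ℕ) (hn : 1 ≤ n) (K : Type) [NormedAddCommGroup K]
    [InnerProductSpace ℂ K] [CompleteSpace K] (K₀ : K →L[ℂ] Hbd n)
    (hran : ∀ u : K, ∃ f : Bdy n → ℂ, ⇑(K₀ u) =ᵐ[(volume : Measure (Bdy n))] f ∧ MemH32B n f)
    (α : Bdy n → ℂ) (hα : MemLp α ⊤ (volume : Measure (Bdy n)))
    (hsmall : ∀ ε : ℝ, 0 < ε → volume {y : Bdy n | ε ≤ ‖α y‖} < ⊤)
    (T : K →L[ℂ] Hbd n)
    (hT : ∀ u : K, ⇑(T u) =ᵐ[(volume : Measure (Bdy n))] fun y => α y * (K₀ u) y) :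
    IsCompactOperator ⇑T :=
  statement4_general n 2 ENNReal.ofNat_ne_top K K₀
    (fun u ↦ let ⟨_, hf, hmem⟩ := hran u; hmem.memW1.congr_ae hf.symm) α hα hsmall T hT

end RobinHS
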